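/- Let 𝒮 = {(0,1),(1,−1),(−1,−1),(−2,1),(−1,0)} ⊆ ℤ². Then for all i, j, n ∈ ℕ, the number q(i,j;n) of n-step quadrant walks from (0,0) to (i,j) equals the coefficient of x^{i+5+2n} y^{j+4+n} in the polynomial (y²−x)·(x²y²−xy−y²−2x)·(x³−xy−2y²−x)·(x²y² + x³ + xy + y² + x)^n ∈ ℤ[x,y]. (This is the coefficient form of the identity expressing Q(x,y;t) as the non-negative part in x and y of the rational series ((y²−x)(x²y²−xy−y²−2x)(x³−xy−2y²−x)) / (x⁵y⁴(1 − t(y + x/y + 1/(xy) + y/x² + 1/x))).) -/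

import Mathlib

/-!
Write `K = y + x/y + 1/(xy) + y/x² + 1/x` for the step polynomial and `R` for the rational prefactor,
so that the right-hand side is `c n i j = [x^i y^j] R Kⁿ` in Laurent polynomials. The numbers `c n i j`
satisfy the unrestricted step recursion, and for `i, j ≥ 0` one has `c 0 i j = δ`. Hence they count
quadrant walks as soon as they vanish on the two lines from which a step can enter the quadrant,
namely `j = -1` and `i = -1` (`cCoef_row`, `cCoef_col`); a step raises neither coordinate by more
than `1`.

* On `j = -1`: the substitution `y ↦ x/y` fixes `K` (`kCoef_symm`) and sends `y R` to `-y R`: it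
  exchanges the last two factors of the numerator up to monomials. So `y R Kⁿ` is antisymmetric,
  and the substitution fixes the monomials `x^a y^0`.
* On `i = -1`: the third factor of the numerator is `x³ y ∂K/∂x`, and
  `R = ∂K/∂x · (2y + y⁻² + 2y⁻³ - K)`. Hence, for each power of `y`, `R Kⁿ` is a combination of the
  derivatives `∂(Kⁿ⁺¹)/∂x` and `∂(Kⁿ⁺²)/∂x`, which have no residue in `x`
  (`kCoef_deriv`, `kCoef_residue`).

On the combinatorial side, removing the last step gives the recursion `walkCount_succ`.
-/

open Finset

/-- Partial sum of the first `m` steps of `f`. -/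
def partialSum {n : ℕ} (f : Fin n → ℤ × ℤ) (m : ℕ) : ℤ × ℤ :=
  ∑ k ∈ Finset.univ.filter (fun k : Fin n => (k : ℕ) < m), f k

/-- Number of `n`-step quadrant walks from `(0,0)` to `(i,j)` with steps in `S`. -/
noncomputable def quadWalks (S : Finset (ℤ × ℤ)) (i j : ℕ) (n : ℕ) : ℕ :=
  Nat.card {f : Fin n → ℤ × ℤ //
    (∀ k, f k ∈ S) ∧
    (∀ m : ℕ, m ≤ n → 0 ≤ (partialSum f m).1 ∧ 0 ≤ (partialSum f m).2) ∧
    partialSum f n = ((i : ℤ), (j : ℤ))}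

/-- The step set `{(0,1),(1,−1),(−1,−1),(−2,1),(−1,0)}`. -/
def S17 : Finset (ℤ × ℤ) := {(0, 1), (1, -1), (-1, -1), (-2, 1), (-1, 0)}

/-- The numerator `(y²−x)(x²y²−xy−y²−2x)(x³−xy−2y²−x)`. -/
noncomputable def P17 : MvPolynomial (Fin 2) ℤ :=
  (MvPolynomial.X 1 ^ 2 - MvPolynomial.X 0) *
    (MvPolynomial.X 0 ^ 2 * MvPolynomial.X 1 ^ 2 - MvPolynomial.X 0 * MvPolynomial.X 1 -
      MvPolynomial.X 1 ^ 2 - 2 * MvPolynomial.X 0) *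
    (MvPolynomial.X 0 ^ 3 - MvPolynomial.X 0 * MvPolynomial.X 1 -
      2 * MvPolynomial.X 1 ^ 2 - MvPolynomial.X 0)

/-- The kernel numerator `x²y² + x³ + xy + y² + x`. -/
noncomputable def Kern17 : MvPolynomial (Fin 2) ℤ :=
  MvPolynomial.X 0 ^ 2 * MvPolynomial.X 1 ^ 2 + MvPolynomial.X 0 ^ 3 +
    MvPolynomial.X 0 * MvPolynomial.X 1 + MvPolynomial.X 1 ^ 2 + MvPolynomial.X 0

/-! ### Coefficients at integer exponents -/

/-- The coefficient of `x^a y^b` in a polynomial, for integer exponents: it is `0` when `a` or `b` is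
negative, so that multiplication by a variable is a shift without side conditions. -/
noncomputable def zCoeff (p : MvPolynomial (Fin 2) ℤ) (a b : ℤ) : ℤ :=
  if 0 ≤ a ∧ 0 ≤ b then
    MvPolynomial.coeff (Finsupp.single 0 a.toNat + Finsupp.single 1 b.toNat) p else 0

lemma zCoeff_natCast (p : MvPolynomial (Fin 2) ℤ) (a b : ℕ) :
    zCoeff p a b = MvPolynomial.coeff (Finsupp.single 0 a + Finsupp.single 1 b) p := by
  simp [zCoeff]

lemma zCoeff_add (p q : MvPolynomial (Fin 2) ℤ) (a b : ℤ) :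
    zCoeff (p + q) a b = zCoeff p a b + zCoeff q a b := by
  unfold zCoeff; split_ifs <;> simp

lemma zCoeff_sub (p q : MvPolynomial (Fin 2) ℤ) (a b : ℤ) :
    zCoeff (p - q) a b = zCoeff p a b - zCoeff q a b := by
  unfold zCoeff; split_ifs <;> simp

lemma zCoeff_two_mul (p : MvPolynomial (Fin 2) ℤ) (a b : ℤ) :
    zCoeff (2 * p) a b = 2 * zCoeff p a b := by
  rw [two_mul, zCoeff_add, two_mul]

lemma zCoeff_X0_mul (p : MvPolynomial (Fin 2) ℤ) (a b : ℤ) :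
    zCoeff (MvPolynomial.X 0 * p) a b = zCoeff p (a - 1) b := by
  unfold zCoeff
  by_cases h : 0 ≤ a ∧ 0 ≤ b
  · obtain ⟨ha, hb⟩ := h
    lift a to ℕ using ha
    lift b to ℕ using hb
    cases a with
    | zero => simp [MvPolynomial.coeff_X_mul']
    | succ a =>
      have : (Finsupp.single (0 : Fin 2) (a + 1) + Finsupp.single 1 b) =
          Finsupp.single 0 1 + (Finsupp.single 0 a + Finsupp.single 1 b) := by
        rw [← add_assoc, ← Finsupp.single_add, add_comm 1 a]
      rw [if_pos (by omega), if_pos (by omega)]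
      rw [show ((a + 1 : ℕ) : ℤ).toNat = a + 1 from Int.toNat_natCast _,
        Int.toNat_natCast, this, MvPolynomial.coeff_X_mul,
        show ((a + 1 : ℕ) - 1 : ℤ).toNat = a by omega]
  · rw [if_neg h, if_neg (by omega)]

lemma zCoeff_X1_mul (p : MvPolynomial (Fin 2) ℤ) (a b : ℤ) :
    zCoeff (MvPolynomial.X 1 * p) a b = zCoeff p a (b - 1) := by
  unfold zCoeff
  by_cases h : 0 ≤ a ∧ 0 ≤ b
  · obtain ⟨ha, hb⟩ := h
    lift a to ℕ using ha
    lift b to ℕ using hb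
    cases b with
    | zero => simp [MvPolynomial.coeff_X_mul']
    | succ b =>
      have : (Finsupp.single (0 : Fin 2) a + Finsupp.single 1 (b + 1)) =
          Finsupp.single 1 1 + (Finsupp.single 0 a + Finsupp.single 1 b) := by
        rw [add_left_comm, ← Finsupp.single_add, add_comm 1 b]
      rw [if_pos (by omega), if_pos (by omega)]
      rw [show ((b + 1 : ℕ) : ℤ).toNat = b + 1 from Int.toNat_natCast _,
        Int.toNat_natCast, this, MvPolynomial.coeff_X_mul,
        show ((b + 1 : ℕ) - 1 : ℤ).toNat = b by omega]
  · rw [if_neg h, if_neg (by omega)]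

lemma zCoeff_one (a b : ℤ) : zCoeff 1 a b = if a = 0 ∧ b = 0 then 1 else 0 := by
  unfold zCoeff
  by_cases h : 0 ≤ a ∧ 0 ≤ b
  · obtain ⟨ha, hb⟩ := h
    lift a to ℕ using ha
    lift b to ℕ using hb
    rw [if_pos (by simp), MvPolynomial.coeff_one]
    congr 1
    simp [Finsupp.ext_iff, eq_comm]
  · rw [if_neg h, if_neg (by omega)]

/-! ### Powers of the step polynomial -/

/-- `[x^a y^b] Kⁿ`, where `K = Kern17 / (x² y)`. -/
noncomputable def kCoef (n : ℕ) (a b : ℤ) : ℤ :=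
  zCoeff (Kern17 ^ n) (a + 2 * n) (b + n)

/-- `[x^a y^b] R Kⁿ`, where `R = P17 / (x⁵ y⁴)` and `K = Kern17 / (x² y)`. -/
noncomputable def cCoef (n : ℕ) (a b : ℤ) : ℤ :=
  zCoeff (P17 * Kern17 ^ n) (a + 5 + 2 * n) (b + 4 + n)

lemma kCoef_zero (a b : ℤ) : kCoef 0 a b = if a = 0 ∧ b = 0 then 1 else 0 := by
  simp [kCoef, zCoeff_one]

lemma zCoeff_kern_mul (p : MvPolynomial (Fin 2) ℤ) (a b : ℤ) :
    zCoeff (Kern17 * p) a b = zCoeff p (a - 2) (b - 2) + zCoeff p (a - 3) b +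
      zCoeff p (a - 1) (b - 1) + zCoeff p a (b - 2) + zCoeff p (a - 1) b := by
  simp only [Kern17, pow_succ, pow_zero, one_mul, add_mul, mul_assoc, zCoeff_add, zCoeff_X0_mul,
    zCoeff_X1_mul, sub_sub]
  norm_num

lemma kCoef_succ (n : ℕ) (a b : ℤ) :
    kCoef (n + 1) a b = kCoef n a (b - 1) + kCoef n (a - 1) (b + 1) +
      kCoef n (a + 1) (b + 1) + kCoef n (a + 2) (b - 1) + kCoef n (a + 1) b := by
  simp only [kCoef, pow_succ', zCoeff_kern_mul]
  push_cast
  ring_nf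

lemma cCoef_succ (n : ℕ) (a b : ℤ) :
    cCoef (n + 1) a b = cCoef n a (b - 1) + cCoef n (a - 1) (b + 1) +
      cCoef n (a + 1) (b + 1) + cCoef n (a + 2) (b - 1) + cCoef n (a + 1) b := by
  simp only [cCoef, pow_succ', mul_left_comm P17, zCoeff_kern_mul]
  push_cast
  ring_nf

/-- Expansion of the numerator `P17` into its 14 monomials. -/
lemma cCoef_eq (n : ℕ) (a b : ℤ) :
    cCoef n a b =
      2 * kCoef n (a + 5) (b - 2) + 3 * kCoef n (a + 4) b + 3 * kCoef n (a + 4) (b - 1)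
      - 3 * kCoef n (a + 3) (b + 2) + kCoef n (a + 3) b - 2 * kCoef n (a + 3) (b - 2)
      - 2 * kCoef n (a + 2) (b + 4) - 3 * kCoef n (a + 2) (b + 3) - kCoef n (a + 2) (b + 2)
      - kCoef n (a + 2) (b - 1) + 2 * kCoef n a (b + 4) + kCoef n a (b + 3) + kCoef n a b
      - kCoef n (a - 1) (b + 2) := by
  simp only [cCoef, kCoef, P17, pow_succ (_ : MvPolynomial (Fin 2) ℤ) 1,
    pow_succ (_ : MvPolynomial (Fin 2) ℤ) 2, pow_one, sub_mul, mul_assoc,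
    zCoeff_sub, zCoeff_two_mul, zCoeff_X0_mul, zCoeff_X1_mul]
  ring_nf

/-! ### Vanishing on the two boundary lines -/

/-- `Kⁿ` is invariant under `y ↦ x / y`. -/
lemma kCoef_symm (n : ℕ) : ∀ a b : ℤ, kCoef n a b = kCoef n (a + b) (-b) := by
  induction n with
  | zero =>
    intro a b
    rw [kCoef_zero, kCoef_zero]
    congr 1
    apply propext
    omega
  | succ n ih =>
    intro a b
    rw [kCoef_succ, kCoef_succ, ih a (b - 1), ih (a - 1) (b + 1), ih (a + 1) (b + 1),
      ih (a + 2) (b - 1), ih (a + 1) b]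
    ring_nf

/-- `x ∂(Kⁿ⁺¹)/∂x = (n + 1) (x ∂K/∂x) Kⁿ`, read off at `x^a y^b`. -/
lemma kCoef_deriv (n : ℕ) : ∀ a b : ℤ,
    (n + 1 : ℤ) * (kCoef n (a - 1) (b + 1) - kCoef n (a + 1) (b + 1)
      - 2 * kCoef n (a + 2) (b - 1) - kCoef n (a + 1) b) = a * kCoef (n + 1) a b := by
  induction n with
  | zero =>
    intro a b
    -- `a * kCoef 0 a b = 0` turns each factor `a` into the first coordinate of the step
    have h (a b : ℤ) : a * kCoef 0 a b = 0 := by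
      rw [kCoef_zero]; split_ifs with h <;> simp [h]
    rw [kCoef_succ]
    push_cast
    linear_combination -h a (b - 1) - h (a - 1) (b + 1) - h (a + 1) (b + 1) - h (a + 2) (b - 1) -
      h (a + 1) b
  | succ n ih =>
    intro a b
    have h1 := ih a (b - 1)
    have h2 := ih (a - 1) (b + 1)
    have h3 := ih (a + 1) (b + 1)
    have h4 := ih (a + 2) (b - 1)
    have h5 := ih (a + 1) b
    rw [kCoef_succ (n + 1) a b]
    have e : (n + 1 : ℤ) * (kCoef (n + 1) (a - 1) (b + 1) - kCoef (n + 1) (a + 1) (b + 1)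
        - 2 * kCoef (n + 1) (a + 2) (b - 1) - kCoef (n + 1) (a + 1) b) =
        a * kCoef (n + 1) a (b - 1) + (a - 1) * kCoef (n + 1) (a - 1) (b + 1) +
        (a + 1) * kCoef (n + 1) (a + 1) (b + 1) + (a + 2) * kCoef (n + 1) (a + 2) (b - 1) +
        (a + 1) * kCoef (n + 1) (a + 1) b := by
      rw [← h1, ← h2, ← h3, ← h4, ← h5]
      simp only [kCoef_succ n]
      ring_nf
    push_cast
    linear_combination e

lemma kCoef_residue (n : ℕ) (b : ℤ) :
    kCoef n (-1) (b + 1) - kCoef n 1 (b + 1) - 2 * kCoef n 2 (b - 1) - kCoef n 1 b = 0 := by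
  have h := kCoef_deriv n 0 b
  simp only [zero_mul, zero_sub, zero_add] at h
  exact (mul_eq_zero.mp h).resolve_left (by positivity)

lemma cCoef_row (n : ℕ) (a : ℤ) : cCoef n a (-1) = 0 := by
  rw [cCoef_eq]
  have h1 := kCoef_symm n (a + 5) (-1 - 2)
  have h2 := kCoef_symm n (a + 4) (-1)
  have h3 := kCoef_symm n (a + 4) (-1 - 1)
  have h4 := kCoef_symm n (a + 3) (-1)
  have h5 := kCoef_symm n (a + 3) (-1 - 2)
  have h6 := kCoef_symm n (a + 2) (-1 - 1)
  have h7 := kCoef_symm n a (-1)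
  ring_nf at *
  linarith

/-- `R = ∂K/∂x · (2y + y⁻² + 2y⁻³ - K)`, so `R Kⁿ` has no residue in `x`. -/
lemma cCoef_col (n : ℕ) (b : ℤ) : cCoef n (-1) b = 0 := by
  rw [cCoef_eq]
  have h1 := kCoef_residue n (b - 1)
  have h2 := kCoef_residue n (b + 2)
  have h3 := kCoef_residue n (b + 3)
  have h4 := kCoef_residue (n + 1) b
  simp only [kCoef_succ n] at h4
  ring_nf at *
  linarith

lemma cCoef_zero (i j : ℕ) : cCoef 0 i j = if i = 0 ∧ j = 0 then 1 else 0 := by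
  have h (a b : ℤ) (hab : ¬ (a = 0 ∧ b = 0)) : kCoef 0 a b = 0 := by
    rw [kCoef_zero, if_neg hab]
  rw [cCoef_eq, h (i + 5), h (i + 4), h (i + 4), h (i + 3), h (i + 3), h (i + 3), h (i + 2),
    h (i + 2), h (i + 2), h (i + 2), h i (j + 4), h i (j + 3), h (i - 1), kCoef_zero]
  · norm_cast
    simp
  all_goals omega

/-! ### Counting walks by their last step -/

/-- The walks counted by `quadWalks`, with an arbitrary endpoint in `ℤ²`. -/
def IsWalk (S : Finset (ℤ × ℤ)) (n : ℕ) (p : ℤ × ℤ) (f : Fin n → ℤ × ℤ) : Prop :=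
  (∀ k, f k ∈ S) ∧
    (∀ m : ℕ, m ≤ n → 0 ≤ (partialSum f m).1 ∧ 0 ≤ (partialSum f m).2) ∧
    partialSum f n = p

/-- The number of `n`-step quadrant walks ending at `p ∈ ℤ²`. -/
noncomputable def walkCount (S : Finset (ℤ × ℤ)) (n : ℕ) (p : ℤ × ℤ) : ℕ :=
  Nat.card {f : Fin n → ℤ × ℤ // IsWalk S n p f}

instance finite_walks (S : Finset (ℤ × ℤ)) (n : ℕ) (p : ℤ × ℤ) :
    Finite {f : Fin n → ℤ × ℤ // IsWalk S n p f} := by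
  refine Finite.of_injective (β := Fin n → S) (fun f k => ⟨f.1 k, f.2.1 k⟩) ?_
  intro f g h
  ext1
  funext k
  exact congrArg Subtype.val (congrFun h k)

lemma partialSum_snoc_le {n : ℕ} (g : Fin n → ℤ × ℤ) (s : ℤ × ℤ) (m : ℕ) (hm : m ≤ n) :
    partialSum (Fin.snoc g s : Fin (n + 1) → ℤ × ℤ) m = partialSum g m := by
  simp only [partialSum, Finset.sum_filter, Fin.sum_univ_castSucc, Fin.snoc_castSucc,
    Fin.snoc_last, Fin.val_castSucc, Fin.val_last]
  rw [if_neg (by omega), add_zero]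

lemma partialSum_snoc_last {n : ℕ} (g : Fin n → ℤ × ℤ) (s : ℤ × ℤ) :
    partialSum (Fin.snoc g s : Fin (n + 1) → ℤ × ℤ) (n + 1) = partialSum g n + s := by
  simp only [partialSum, Finset.sum_filter, Fin.sum_univ_castSucc, Fin.snoc_castSucc,
    Fin.snoc_last, Fin.val_castSucc, Fin.val_last]
  rw [if_pos (by omega)]
  congr 1
  refine Finset.sum_congr rfl fun k _ => ?_
  rw [if_pos (by omega), if_pos k.2]

lemma isWalk_snoc {S : Finset (ℤ × ℤ)} {n : ℕ} {p : ℤ × ℤ} (hp : 0 ≤ p.1 ∧ 0 ≤ p.2)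
    (g : Fin n → ℤ × ℤ) (s : ℤ × ℤ) :
    IsWalk S (n + 1) p (Fin.snoc g s : Fin (n + 1) → ℤ × ℤ) ↔ s ∈ S ∧ IsWalk S n (p - s) g := by
  unfold IsWalk
  rw [partialSum_snoc_last, eq_sub_iff_add_eq]
  constructor
  · rintro ⟨h1, h2, h3⟩
    refine ⟨by simpa using h1 (Fin.last n), fun k => by simpa using h1 k.castSucc,
      fun m hm => ?_, h3⟩
    rw [← partialSum_snoc_le g s m hm]
    exact h2 m (by omega)
  · rintro ⟨hs, h1, h2, h3⟩
    refine ⟨fun k => ?_, fun m hm => ?_, h3⟩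
    · refine Fin.lastCases ?_ (fun k => ?_) k
      · simpa using hs
      · simpa using h1 k
    · rcases Nat.lt_or_ge n m with h | h
      · obtain rfl : m = n + 1 := by omega
        rw [partialSum_snoc_last, h3]
        exact hp
      · rw [partialSum_snoc_le g s m h]
        exact h2 m h

/-- A walk ending in the quadrant is a shorter walk followed by a step of `S`. -/
def walkEquiv (S : Finset (ℤ × ℤ)) (n : ℕ) (p : ℤ × ℤ) (hp : 0 ≤ p.1 ∧ 0 ≤ p.2) :
    {f : Fin (n + 1) → ℤ × ℤ // IsWalk S (n + 1) p f} ≃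
      Σ s : S, {g : Fin n → ℤ × ℤ // IsWalk S n (p - s) g} where
  toFun f :=
    have h := (isWalk_snoc hp (Fin.init f.1) (f.1 (Fin.last n))).mp
      (by rw [Fin.snoc_init_self]; exact f.2)
    ⟨⟨f.1 (Fin.last n), h.1⟩, ⟨Fin.init f.1, h.2⟩⟩
  invFun x := ⟨Fin.snoc x.2.1 x.1.1, (isWalk_snoc hp _ _).mpr ⟨x.1.2, x.2.2⟩⟩
  left_inv f := by simp
  right_inv := by
    rintro ⟨⟨s, hs⟩, ⟨g, hg⟩⟩
    have h1 : (Fin.snoc g s : Fin (n + 1) → ℤ × ℤ) (Fin.last n) = s := by simp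
    have h2 : Fin.init (Fin.snoc g s : Fin (n + 1) → ℤ × ℤ) = g := by simp
    refine Sigma.ext (Subtype.ext h1) ?_
    dsimp only
    congr! 1
    rw [h1]

lemma walkCount_succ (S : Finset (ℤ × ℤ)) (n : ℕ) (p : ℤ × ℤ) (hp : 0 ≤ p.1 ∧ 0 ≤ p.2) :
    walkCount S (n + 1) p = ∑ s ∈ S, walkCount S n (p - s) := by
  unfold walkCount
  rw [Nat.card_congr (walkEquiv S n p hp), Nat.card_sigma]
  exact Finset.sum_coe_sort S fun s => Nat.card {g : Fin n → ℤ × ℤ // IsWalk S n (p - s) g}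

lemma walkCount_of_neg (S : Finset (ℤ × ℤ)) (n : ℕ) (p : ℤ × ℤ) (hp : ¬ (0 ≤ p.1 ∧ 0 ≤ p.2)) :
    walkCount S n p = 0 := by
  have : IsEmpty {f : Fin n → ℤ × ℤ // IsWalk S n p f} :=
    ⟨fun f => hp (by simpa only [f.2.2.2] using f.2.2.1 n le_rfl)⟩
  exact Nat.card_of_isEmpty

lemma walkCount_zero (S : Finset (ℤ × ℤ)) (p : ℤ × ℤ) :
    walkCount S 0 p = if p = 0 then 1 else 0 := by
  have h (f : Fin 0 → ℤ × ℤ) : IsWalk S 0 p f ↔ p = 0 := by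
    simp [IsWalk, partialSum, eq_comm]
  unfold walkCount
  simp only [h]
  split_ifs with hp <;> simp [hp]

/-- Agreement on the quadrant extends to the lines `a = -1` and `b = -1`, where both sides vanish. -/
lemma walkCount_eq_cCoef_of_quadrant {n : ℕ}
    (h : ∀ i j : ℕ, (walkCount S17 n (i, j) : ℤ) = cCoef n i j) (a b : ℤ)
    (ha : -1 ≤ a) (hb : -1 ≤ b) : (walkCount S17 n (a, b) : ℤ) = cCoef n a b := by
  by_cases hab : 0 ≤ a ∧ 0 ≤ b
  · obtain ⟨ha, hb⟩ := hab
    lift a to ℕ using ha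
    lift b to ℕ using hb
    exact h a b
  · rw [walkCount_of_neg _ _ _ hab]
    rcases (show a = -1 ∨ b = -1 by omega) with rfl | rfl
    · simp [cCoef_col]
    · simp [cCoef_row]

lemma walkCount_eq_cCoef (n : ℕ) : ∀ i j : ℕ, (walkCount S17 n (i, j) : ℤ) = cCoef n i j := by
  induction n with
  | zero =>
    intro i j
    rw [walkCount_zero, cCoef_zero]
    simp [Prod.ext_iff]
  | succ n ih =>
    intro i j
    -- every step of `S17` has both coordinates at most `1`, so predecessors have coordinates `≥ -1`
    have e := walkCount_eq_cCoef_of_quadrant ih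
    rw [walkCount_succ _ _ _ (by simp), cCoef_succ, ← e i (j - 1) (by omega) (by omega),
      ← e (i - 1) (j + 1) (by omega) (by omega), ← e (i + 1) (j + 1) (by omega) (by omega),
      ← e (i + 2) (j - 1) (by omega) (by omega), ← e (i + 1) j (by omega) (by omega)]
    have hS : ∑ s ∈ S17, walkCount S17 n (((i : ℤ), (j : ℤ)) - s) =
        ∑ s ∈ ({(0, 1), (1, -1), (-1, -1), (-2, 1), (-1, 0)} : Finset (ℤ × ℤ)),
          walkCount S17 n (((i : ℤ), (j : ℤ)) - s) := rfl
    rw [hS, Finset.sum_insert (by decide), Finset.sum_insert (by decide),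
      Finset.sum_insert (by decide), Finset.sum_insert (by decide), Finset.sum_singleton]
    simp only [Prod.mk_sub_mk, sub_neg_eq_add, sub_zero]
    push_cast
    ring

/-- `q(i,j;n)` equals the coefficient of `x^{i+5+2n} y^{j+4+n}` in
`(y²−x)(x²y²−xy−y²−2x)(x³−xy−2y²−x)·(x²y²+x³+xy+y²+x)ⁿ`. -/
theorem stmt17 (i j n : ℕ) :
    (quadWalks S17 i j n : ℤ) =
      MvPolynomial.coeff
        (Finsupp.single 0 (i + 5 + 2 * n) + Finsupp.single 1 (j + 4 + n))
        (P17 * Kern17 ^ n) := by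
  have h := walkCount_eq_cCoef n i j
  have hc : cCoef n i j = MvPolynomial.coeff
      (Finsupp.single 0 (i + 5 + 2 * n) + Finsupp.single 1 (j + 4 + n)) (P17 * Kern17 ^ n) := by
    rw [← zCoeff_natCast, cCoef]
    push_cast
    rfl
  rw [← hc, ← h]
  rfl
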